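/- Let n, m ≥ 4 be integers and let G = P_n □ P_m be the grid. If k is an integer such that 6 ≤ k ≤ 2·max{n, m} − 1, then nm − k ∈ S_SC(G). Moreover, if m = 4 (or n = 4), then also nm − 5 ∈ S_SC(G). -/

import Mathlib

/-!  Common definitions: oriented graphs, geodesic convexity, convexity number,
strong convexity spectrum, and grid graphs. -/

variable {V : Type*}

/-- A directed walk of length `k` from `u` to `v` along the arc relation `A`,
encoded by the function `f` listing its vertices. -/
def IsDirWalk (A : V → V → Prop) (k : ℕ) (f : ℕ → V) (u v : V) : Prop :=
  f 0 = u ∧ f k = v ∧ ∀ i, i < k → A (f i) (f (i + 1))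

/-- There is a directed walk from `u` to `v`. -/
def DirReachable (A : V → V → Prop) (u v : V) : Prop :=
  ∃ k f, IsDirWalk A k f u v

/-- A digraph (given by its arc relation) is strongly connected. -/
def StrongConnected (A : V → V → Prop) : Prop :=
  ∀ u v : V, DirReachable A u v

/-- A `uv`-geodesic: a directed walk from `u` to `v` of minimum possible length
(such a walk is automatically a directed path). -/
def IsGeodesic (A : V → V → Prop) (k : ℕ) (f : ℕ → V) (u v : V) : Prop :=
  IsDirWalk A k f u v ∧ ∀ k' f', IsDirWalk A k' f' u v → k ≤ k'

/-- A nonempty vertex set `C` is convex if every vertex lying on a geodesic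
between two vertices of `C` (in either direction) belongs to `C`. -/
def DConvex (A : V → V → Prop) (C : Set V) : Prop :=
  C.Nonempty ∧ ∀ u ∈ C, ∀ v ∈ C, ∀ k f, IsGeodesic A k f u v → ∀ i ≤ k, f i ∈ C

/-- `A` is an orientation of the simple graph `G`: every arc is along an edge,
every edge gets an arc, and no edge gets both directions. -/
def IsOrientation (G : SimpleGraph V) (A : V → V → Prop) : Prop :=
  (∀ x y, A x y → G.Adj x y) ∧ (∀ x y, G.Adj x y → A x y ∨ A y x) ∧
    (∀ x y, A x y → ¬ A y x)

/-- The convexity number of a digraph: the maximum cardinality of a proper convex set. -/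
noncomputable def convexityNumber [Fintype V] (A : V → V → Prop) : ℕ :=
  sSup {k | ∃ C : Set V, DConvex A C ∧ C ≠ Set.univ ∧ C.ncard = k}

/-- The strong convexity spectrum of a graph: the set of convexity numbers of
its strongly connected orientations. -/
def strongConvexitySpectrum [Fintype V] (G : SimpleGraph V) : Set ℕ :=
  {k | ∃ A : V → V → Prop, IsOrientation G A ∧ StrongConnected A ∧ convexityNumber A = k}

/-- The grid graph `P_n □ P_m`. -/
def gridGraph (n m : ℕ) : SimpleGraph (Fin n × Fin m) :=
  (SimpleGraph.pathGraph n).boxProd (SimpleGraph.pathGraph m)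

namespace GridSpec

/-! ### General facts about directed walks -/

theorem walk_trans {V : Type*} {A : V → V → Prop} {k l : ℕ} {f g : ℕ → V} {u v w : V}
    (hf : IsDirWalk A k f u v) (hg : IsDirWalk A l g v w) :
    IsDirWalk A (k + l) (fun i => if i ≤ k then f i else g (i - k)) u w := by
  obtain ⟨f0, fk, fs⟩ := hf
  obtain ⟨g0, gl, gs⟩ := hg
  refine ⟨by simpa using f0, ?_, ?_⟩
  · by_cases hl : l = 0
    · subst hl
      simp only [add_zero, le_refl, if_true]
      rw [fk, ← g0, gl]
    · have : ¬ (k + l ≤ k) := by omega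
      simp only [this, if_false]
      rw [Nat.add_sub_cancel_left, gl]
  · intro i hi
    by_cases h1 : i + 1 ≤ k
    · have h2 : i ≤ k := by omega
      simp only [h1, h2, if_true]
      exact fs i (by omega)
    · by_cases h2 : i ≤ k
      · have h3 : i = k := by omega
        subst h3
        simp only [h1, le_refl, if_true, if_false]
        have := gs 0 (by omega)
        rw [g0] at this
        rw [fk, Nat.add_sub_cancel_left]
        exact this
      · simp only [h1, h2, if_false]
        have := gs (i - k) (by omega)
        rw [show i + 1 - k = i - k + 1 by omega]
        exact this

theorem walk_take {V : Type*} {A : V → V → Prop} {k p : ℕ} {f : ℕ → V} {u v : V}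
    (hf : IsDirWalk A k f u v) (hp : p ≤ k) : IsDirWalk A p f u (f p) :=
  ⟨hf.1, rfl, fun i hi => hf.2.2 i (by omega)⟩

theorem walk_drop {V : Type*} {A : V → V → Prop} {k p : ℕ} {f : ℕ → V} {u v : V}
    (hf : IsDirWalk A k f u v) (hp : p ≤ k) :
    IsDirWalk A (k - p) (fun i => f (p + i)) (f p) v :=
  ⟨rfl, by simp only [Nat.add_sub_cancel' hp]; exact hf.2.1,
    fun i hi => by
      have := hf.2.2 (p + i) (by omega)
      exact this⟩

theorem exists_geodesic {V : Type*} {A : V → V → Prop} (hs : StrongConnected A) (u v : V) :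
    ∃ k f, IsGeodesic A k f u v := by
  classical
  have h : ∃ k, ∃ f, IsDirWalk A k f u v := hs u v
  obtain ⟨f, hf⟩ := Nat.find_spec h
  exact ⟨Nat.find h, f, hf, fun k' f' h' => Nat.find_min' h ⟨f', h'⟩⟩

/-- A walk from inside `R` to outside `R` crosses the boundary. -/
theorem exists_crossing {V : Type*} {A : V → V → Prop} {k : ℕ} {f : ℕ → V} {u v : V}
    (hf : IsDirWalk A k f u v) (R : V → Prop) (hu : R u) (hv : ¬ R v) :
    ∃ i, i < k ∧ R (f i) ∧ ¬ R (f (i + 1)) := by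
  by_contra hcon
  push Not at hcon
  have : ∀ i, i ≤ k → R (f i) := by
    intro i
    induction i with
    | zero => intro _; rw [hf.1]; exact hu
    | succ i ih => intro hi; exact hcon i (by omega) (ih (by omega))
  exact hv (by simpa [hf.2.1] using this k le_rfl)

theorem sep_mem {V : Type*} {A : V → V → Prop} (hs : StrongConnected A) {T : Set V}
    (hT : DConvex A T) {u v w : V} (hu : u ∈ T) (hv : v ∈ T) (R : V → Prop) (hRu : R u)
    (hRv : ¬ R v) (hR : ∀ a b, R a → ¬ R b → A a b → a = w ∨ b = w) : w ∈ T := by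
  obtain ⟨k, f, hg⟩ := exists_geodesic hs u v
  obtain ⟨i, hi, h1, h2⟩ := exists_crossing hg.1 R hRu hRv
  rcases hR _ _ h1 h2 (hg.1.2.2 i hi) with h | h
  · rw [← h]; exact hT.2 u hu v hv k f hg i (by omega)
  · rw [← h]; exact hT.2 u hu v hv k f hg (i + 1) (by omega)

theorem lip_walk {V : Type*} {A : V → V → Prop} {k : ℕ} {f : ℕ → V} {u v : V}
    (hf : IsDirWalk A k f u v) (h : V → ℤ) (hh : ∀ a b, A a b → h b ≤ h a + 1) :
    h v ≤ h u + k := by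
  have : ∀ i, i ≤ k → h (f i) ≤ h u + i := by
    intro i
    induction i with
    | zero => intro _; rw [hf.1]; simp
    | succ i ih =>
      intro hi
      have h1 := ih (by omega)
      have h2 := hh _ _ (hf.2.2 i (by omega))
      push_cast
      linarith
  have := this k le_rfl
  rwa [hf.2.1] at this

theorem interval_mem {V : Type*} {A : V → V → Prop} {T : Set V}
    (hT : DConvex A T) {u v w : V} (hu : u ∈ T) (hv : v ∈ T) {a b : ℕ} {f g : ℕ → V}
    (hf : IsDirWalk A a f u w) (hg : IsDirWalk A b g w v) (h : V → ℤ)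
    (hh : ∀ a b, A a b → h b ≤ h a + 1) (hab : (a : ℤ) + b ≤ h v - h u) : w ∈ T := by
  have hw := walk_trans hf hg
  have := hT.2 u hu v hv (a + b) _ ⟨hw, fun k' f' h' => by
    have := lip_walk h' h hh
    have h3 : ((a + b : ℕ) : ℤ) ≤ k' := by push_cast; linarith
    exact_mod_cast h3⟩ a (by omega)
  simpa [hf.2.1] using this

theorem convex_compl {V : Type*} {A : V → V → Prop} (S : V → Prop) (h : V → ℤ)
    (hne : ∃ v, ¬ S v)
    (hlip : ∀ a b, S a → S b → A a b → h b ≤ h a + 1)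
    (hEE : ∀ x e s y, ¬ S x → S e → A x e → S s → ¬ S y → A s y →
      ∃ (k : ℕ) (f : ℕ → V), IsDirWalk A k f x y ∧ (k : ℤ) + h e ≤ h s + 1) :
    DConvex A {v | ¬ S v} := by
  classical
  refine ⟨hne, ?_⟩
  intro u hu v hv k f hg i hi hSi
  simp only [Set.mem_ofPred_eq] at hu hv
  have hSi : S (f i) := by simpa using hSi
  -- last vertex outside before i
  have hi0 : i ≠ 0 := by rintro rfl; rw [hg.1.1] at hSi; exact hu hSi
  have hik : i ≠ k := by rintro rfl; rw [hg.1.2.1] at hSi; exact hv hSi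
  set p := Nat.findGreatest (fun t => ¬ S (f t)) i with hp
  have hp1 : ¬ S (f p) :=
    Nat.findGreatest_spec (P := fun t => ¬ S (f t)) (Nat.zero_le i) (by rw [hg.1.1]; exact hu)
  have hpi : p ≤ i := Nat.findGreatest_le i
  have hpi' : p ≠ i := by intro he; rw [he] at hp1; exact hp1 hSi
  have hpS : ∀ t, p < t → t ≤ i → S (f t) := by
    intro t h1 h2
    have := Nat.findGreatest_is_greatest (P := fun t => ¬ S (f t)) h1 h2
    simpa using this
  have hex : ∃ t, i ≤ t ∧ ¬ S (f t) := ⟨k, hi, by rw [hg.1.2.1]; exact hv⟩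
  set q := Nat.find hex with hq
  obtain ⟨hq1, hq2⟩ := Nat.find_spec hex
  have hqk : q ≤ k := Nat.find_min' hex ⟨hi, by rw [hg.1.2.1]; exact hv⟩
  have hqS : ∀ t, i ≤ t → t < q → S (f t) := by
    intro t h1 h2
    have := Nat.find_min hex h2
    simpa [h1] using this
  have hqi : q ≠ i := by intro he; rw [← hq, he] at hq2; exact hq2 hSi
  have hq1' : i ≤ q := hq1
  have hS : ∀ t, p < t → t < q → S (f t) := by
    intro t h1 h2
    by_cases h3 : t ≤ i
    · exact hpS t h1 h3
    · exact hqS t (by omega) h2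
  have hL : ∀ d, p + 1 + d < q → h (f (p + 1 + d)) ≤ h (f (p + 1)) + d := by
    intro d
    induction d with
    | zero => intro _; simp
    | succ d ih =>
      intro hd
      have h1 := ih (by omega)
      have h2 := hlip _ _ (hS (p + 1 + d) (by omega) (by omega))
        (hS (p + 1 + d + 1) (by omega) (by omega)) (hg.1.2.2 (p + 1 + d) (by omega))
      have h3 : p + 1 + (d + 1) = p + 1 + d + 1 := by ring
      rw [h3]
      push_cast
      linarith
  have hL' := hL (q - p - 2) (by omega)
  rw [show p + 1 + (q - p - 2) = q - 1 by omega] at hL'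
  have hsy := hg.1.2.2 (q - 1) (by omega)
  rw [show q - 1 + 1 = q by omega] at hsy
  obtain ⟨k', g, hgw, hk'⟩ := hEE (f p) (f (p + 1)) (f (q - 1)) (f q) hp1
    (hS _ (by omega) (by omega)) (hg.1.2.2 p (by omega)) (hS _ (by omega) (by omega)) hq2 hsy
  have hw := walk_trans (walk_trans (walk_take hg.1 (show p ≤ k by omega)) hgw)
    (walk_drop hg.1 hqk)
  have := hg.2 _ _ hw
  have hcast : ((q - p - 2 : ℕ) : ℤ) = (q : ℤ) - p - 2 := by omega
  rw [hcast] at hL'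
  omega

theorem convexityNumber_eq {V : Type*} [Fintype V] {A : V → V → Prop} (S : V → Prop)
    (hC : DConvex A {v | ¬ S v}) (hS : ∃ v, S v)
    (hT : ∀ T : Set V, DConvex A T → (∃ s ∈ T, S s) →
      T = Set.univ ∨ T.ncard ≤ {v | ¬ S v}.ncard) :
    convexityNumber A = {v | ¬ S v}.ncard := by
  unfold convexityNumber
  apply IsGreatest.csSup_eq
  constructor
  · refine ⟨_, hC, ?_, rfl⟩
    obtain ⟨v, hv⟩ := hS
    intro h
    have : v ∈ {v | ¬ S v} := by rw [h]; trivial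
    exact this hv
  · rintro k ⟨T, hT1, hT2, rfl⟩
    by_cases h : ∃ s ∈ T, S s
    · rcases hT T hT1 h with h | h
      · exact absurd h hT2
      · exact h
    · push Not at h
      exact Set.ncard_le_ncard (fun v hv => h v hv) (Set.toFinite _)

/-- Transport of the spectrum along a graph isomorphism. -/
theorem spectrum_iso {V W : Type*} [Fintype V] [Fintype W] {G : SimpleGraph V}
    {G' : SimpleGraph W} (e : V ≃ W) (he : ∀ x y, G.Adj x y ↔ G'.Adj (e x) (e y)) {k : ℕ}
    (hk : k ∈ strongConvexitySpectrum G') : k ∈ strongConvexitySpectrum G := by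
  obtain ⟨A, ⟨h1, h2, h3⟩, hs, hc⟩ := hk
  have hwalk : ∀ k f u v, IsDirWalk (fun x y => A (e x) (e y)) k f u v ↔
      IsDirWalk A k (fun i => e (f i)) (e u) (e v) := by
    intro k f u v
    simp [IsDirWalk]
  have hwalk' : ∀ k f u v, IsDirWalk A k f (e u) (e v) ↔
      IsDirWalk (fun x y => A (e x) (e y)) k (fun i => e.symm (f i)) u v := by
    intro k f u v
    rw [hwalk]
    simp
  have hgeo : ∀ k f u v, IsGeodesic (fun x y => A (e x) (e y)) k f u v ↔
      IsGeodesic A k (fun i => e (f i)) (e u) (e v) := by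
    intro k f u v
    unfold IsGeodesic
    rw [hwalk]
    refine and_congr_right fun _ => ⟨fun h k' f' h' => h k' _ ((hwalk' _ _ _ _).1 h'),
      fun h k' f' h' => h k' _ ((hwalk _ _ _ _).1 h')⟩
  refine ⟨fun x y => A (e x) (e y), ⟨fun x y h => (he x y).2 (h1 _ _ h),
    fun x y h => h2 _ _ ((he x y).1 h), fun x y h => h3 _ _ h⟩, ?_, ?_⟩
  · intro u v
    obtain ⟨k, f, hf⟩ := hs (e u) (e v)
    exact ⟨k, _, (hwalk' _ _ _ _).1 hf⟩
  · rw [← hc]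
    unfold convexityNumber
    congr 1
    have hconv : ∀ C : Set W, DConvex A C ↔ DConvex (fun x y => A (e x) (e y)) (Set.preimage e C) := by
      intro C
      constructor
      · rintro ⟨⟨w, hw⟩, h⟩
        refine ⟨⟨e.symm w, by simpa using hw⟩, ?_⟩
        intro u hu v hv k f hf i hi
        exact h _ hu _ hv k _ ((hgeo _ _ _ _).1 hf) i hi
      · rintro ⟨⟨w, hw⟩, h⟩
        refine ⟨⟨e w, hw⟩, ?_⟩
        intro u hu v hv k f hf i hi
        have := h (e.symm u) (by simpa using hu) (e.symm v) (by simpa using hv) k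
          (fun i => e.symm (f i)) ((hgeo _ _ _ _).2 (by simpa using hf)) i hi
        simpa using this
    have hcard : ∀ C : Set W, (Set.preimage e C).ncard = C.ncard := by
      intro C
      rw [← Set.ncard_image_of_injective _ e.injective, Equiv.image_preimage]
    ext k
    constructor
    · rintro ⟨C, hC, hne, hk⟩
      have hC' : Set.preimage e (Set.image e C) = C := Equiv.preimage_image _ _
      refine ⟨Set.image e C, (hconv _).2 (by rw [hC']; exact hC), ?_, ?_⟩
      · intro h
        rw [h] at hC'
        exact hne (by rw [← hC']; simp)
      · rw [← hk, Set.ncard_image_of_injective _ e.injective]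
    · rintro ⟨C, hC, hne, hk⟩
      refine ⟨Set.preimage e C, (hconv _).1 hC, ?_, by rw [hcard, hk]⟩
      intro h
      apply hne
      ext w
      have : e.symm w ∈ Set.preimage e C := by rw [h]; trivial
      simpa using this

/-! ### Grid orientations in coordinates -/

/-- `H i j` : the edge between `(i,j)` and `(i,j+1)` points right;
`D i j` : the edge between `(i,j)` and `(i+1,j)` points down. -/
def Arc (H D : ℕ → ℕ → Prop) (a b c d : ℕ) : Prop :=
  (a = c ∧ d = b + 1 ∧ H a b) ∨ (a = c ∧ b = d + 1 ∧ ¬ H c d) ∨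
  (b = d ∧ c = a + 1 ∧ D a b) ∨ (b = d ∧ a = c + 1 ∧ ¬ D c d)

/-- The orientation of the grid given by `H` and `D`. -/
def gA (n m : ℕ) (H D : ℕ → ℕ → Prop) (u v : Fin n × Fin m) : Prop :=
  Arc H D u.1 u.2 v.1 v.2

theorem gA_orientation (n m : ℕ) (H D : ℕ → ℕ → Prop) :
    IsOrientation (gridGraph n m) (gA n m H D) := by
  have hadj : ∀ x y : Fin n × Fin m, (gridGraph n m).Adj x y ↔
      (((x.1 : ℕ) + 1 = y.1 ∨ (y.1 : ℕ) + 1 = x.1) ∧ (x.2 : ℕ) = y.2) ∨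
      (((x.2 : ℕ) + 1 = y.2 ∨ (y.2 : ℕ) + 1 = x.2) ∧ (x.1 : ℕ) = y.1) := by
    intro x y
    unfold gridGraph
    rw [SimpleGraph.boxProd_adj, SimpleGraph.pathGraph_adj, SimpleGraph.pathGraph_adj,
      Fin.ext_iff, Fin.ext_iff]
  refine ⟨?_, ?_, ?_⟩
  · intro x y h
    rw [hadj]
    unfold gA Arc at h
    omega
  · intro x y h
    rw [hadj] at h
    unfold gA Arc
    rcases h with ⟨h | h, h'⟩ | ⟨h | h, h'⟩
    · by_cases hd : D x.1 x.2
      · left; right; right; left; exact ⟨h', h.symm, hd⟩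
      · right; right; right; right; exact ⟨h'.symm, h.symm, hd⟩
    · by_cases hd : D y.1 y.2
      · right; right; right; left; exact ⟨h'.symm, h.symm, hd⟩
      · left; right; right; right; exact ⟨h', h.symm, hd⟩
    · by_cases hd : H x.1 x.2
      · left; left; exact ⟨h', h.symm, hd⟩
      · right; right; left; exact ⟨h'.symm, h.symm, hd⟩
    · by_cases hd : H y.1 y.2
      · right; left; exact ⟨h'.symm, h.symm, hd⟩
      · left; right; left; exact ⟨h', h.symm, hd⟩
  · intro x y h h'
    unfold gA Arc at h h'
    rcases h with ⟨h1, h2, h3⟩ | ⟨h1, h2, h3⟩ | ⟨h1, h2, h3⟩ | ⟨h1, h2, h3⟩ <;>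
    rcases h' with ⟨h4, h5, h6⟩ | ⟨h4, h5, h6⟩ | ⟨h4, h5, h6⟩ | ⟨h4, h5, h6⟩ <;>
    first
      | omega
      | exact h6 h3
      | exact h3 h6

/-- There is a walk of length `k` between the vertices with the given coordinates. -/
def Wk (n m : ℕ) (H D : ℕ → ℕ → Prop) (k i j i' j' : ℕ) : Prop :=
  ∃ u v : Fin n × Fin m, ((u.1 : ℕ) = i ∧ (u.2 : ℕ) = j) ∧ ((v.1 : ℕ) = i' ∧ (v.2 : ℕ) = j') ∧
    ∃ f, IsDirWalk (gA n m H D) k f u v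

/-- The vertex with coordinates `(i,j)` belongs to `T`. -/
def In {n m : ℕ} (T : Set (Fin n × Fin m)) (i j : ℕ) : Prop :=
  ∃ w ∈ T, (w.1 : ℕ) = i ∧ (w.2 : ℕ) = j

theorem pt_ext {n m : ℕ} {u v : Fin n × Fin m} (h1 : (u.1 : ℕ) = v.1) (h2 : (u.2 : ℕ) = v.2) :
    u = v := Prod.ext (Fin.ext h1) (Fin.ext h2)

variable {n m : ℕ} {H D : ℕ → ℕ → Prop}

theorem In.mem {T : Set (Fin n × Fin m)} {v : Fin n × Fin m} (h : In T v.1 v.2) : v ∈ T := by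
  obtain ⟨w, hw, h1, h2⟩ := h
  rwa [← pt_ext h1 h2]

theorem Wk.refl {i j : ℕ} (hi : i < n) (hj : j < m) : Wk n m H D 0 i j i j :=
  ⟨(⟨i, hi⟩, ⟨j, hj⟩), (⟨i, hi⟩, ⟨j, hj⟩), ⟨rfl, rfl⟩, ⟨rfl, rfl⟩,
    fun _ => (⟨i, hi⟩, ⟨j, hj⟩), rfl, rfl, by omega⟩

theorem Wk.trans {k l a b c d e f : ℕ} (h1 : Wk n m H D k a b c d) (h2 : Wk n m H D l c d e f) :
    Wk n m H D (k + l) a b e f := by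
  obtain ⟨u, v, hu, hv, g, hg⟩ := h1
  obtain ⟨u', v', hu', hv', g', hg'⟩ := h2
  have : v = u' := pt_ext (by rw [hv.1, hu'.1]) (by rw [hv.2, hu'.2])
  subst this
  exact ⟨u, v', hu, hv', _, walk_trans hg hg'⟩

theorem Wk.arc {a b c d : ℕ} (ha : a < n) (hb : b < m) (hc : c < n) (hd : d < m)
    (h : Arc H D a b c d) : Wk n m H D 1 a b c d :=
  ⟨(⟨a, ha⟩, ⟨b, hb⟩), (⟨c, hc⟩, ⟨d, hd⟩), ⟨rfl, rfl⟩, ⟨rfl, rfl⟩,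
    fun i => if i = 0 then (⟨a, ha⟩, ⟨b, hb⟩) else (⟨c, hc⟩, ⟨d, hd⟩), rfl, rfl, by
      intro i hi
      have : i = 0 := by omega
      subst this
      exact h⟩

theorem Wk.right {i j j' : ℕ} (hi : i < n) (hj' : j' < m) (hjj : j ≤ j')
    (h : ∀ t, j ≤ t → t < j' → H i t) : Wk n m H D (j' - j) i j i j' := by
  obtain ⟨d, rfl⟩ := Nat.exists_eq_add_of_le hjj
  rw [Nat.add_sub_cancel_left]
  induction d with
  | zero => exact Wk.refl hi hj'
  | succ d ih =>
    exact (ih (by omega) (by omega) (fun t h1 h2 => h t h1 (by omega))).trans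
      (Wk.arc hi (by omega) hi hj' (Or.inl ⟨rfl, rfl, h _ (by omega) (by omega)⟩))

theorem Wk.down {i i' j : ℕ} (hi' : i' < n) (hj : j < m) (hii : i ≤ i')
    (h : ∀ t, i ≤ t → t < i' → D t j) : Wk n m H D (i' - i) i j i' j := by
  obtain ⟨d, rfl⟩ := Nat.exists_eq_add_of_le hii
  rw [Nat.add_sub_cancel_left]
  induction d with
  | zero => exact Wk.refl hi' hj
  | succ d ih =>
    exact (ih (by omega) (by omega) (fun t h1 h2 => h t h1 (by omega))).trans
      (Wk.arc (by omega) hj hi' hj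
        (Or.inr (Or.inr (Or.inl ⟨rfl, rfl, h _ (by omega) (by omega)⟩))))

theorem Wk.left {i j j' : ℕ} (hi : i < n) (hj' : j' < m) (hjj : j ≤ j')
    (h : ∀ t, j ≤ t → t < j' → ¬ H i t) : Wk n m H D (j' - j) i j' i j := by
  obtain ⟨d, rfl⟩ := Nat.exists_eq_add_of_le hjj
  rw [Nat.add_sub_cancel_left]
  induction d with
  | zero => exact Wk.refl hi hj'
  | succ d ih =>
    rw [add_comm d 1]
    exact (Wk.arc hi (by omega) hi (by omega)
        (Or.inr (Or.inl ⟨rfl, by omega, h (j + d) (by omega) (by omega)⟩))).trans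
      (ih (by omega) (by omega) (fun t h1 h2 => h t h1 (by omega)))

theorem Wk.up {i i' j : ℕ} (hi' : i' < n) (hj : j < m) (hii : i ≤ i')
    (h : ∀ t, i ≤ t → t < i' → ¬ D t j) : Wk n m H D (i' - i) i' j i j := by
  obtain ⟨d, rfl⟩ := Nat.exists_eq_add_of_le hii
  rw [Nat.add_sub_cancel_left]
  induction d with
  | zero => exact Wk.refl hi' hj
  | succ d ih =>
    rw [add_comm d 1]
    exact (Wk.arc (by omega) hj (by omega) hj
        (Or.inr (Or.inr (Or.inr ⟨rfl, by omega, h (i + d) (by omega) (by omega)⟩)))).trans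
      (ih (by omega) (by omega) (fun t h1 h2 => h t h1 (by omega)))

theorem strong_of_hub {a b : ℕ}
    (h1 : ∀ i j, i < n → j < m → ∃ k, Wk n m H D k i j a b)
    (h2 : ∀ i j, i < n → j < m → ∃ k, Wk n m H D k a b i j) :
    StrongConnected (gA n m H D) := by
  intro u v
  obtain ⟨k, hk⟩ := h1 u.1 u.2 u.1.2 u.2.2
  obtain ⟨l, hl⟩ := h2 v.1 v.2 v.1.2 v.2.2
  obtain ⟨u', v', hu, hv, f, hf⟩ := hk.trans hl
  rw [pt_ext hu.1 hu.2, pt_ext hv.1 hv.2] at hf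
  exact ⟨_, f, hf⟩

/-- Separation: if every arc leaving `R` is incident with `(wi,wj)`. -/
theorem In.sep (hs : StrongConnected (gA n m H D)) {T : Set (Fin n × Fin m)}
    (hT : DConvex (gA n m H D) T) {i j i' j' : ℕ} (h1 : In T i j) (h2 : In T i' j')
    (R : ℕ → ℕ → Prop) (wi wj : ℕ) (hwi : wi < n) (hwj : wj < m) (hR1 : R i j) (hR2 : ¬ R i' j')
    (hR : ∀ a b c d, a < n → b < m → c < n → d < m → R a b → ¬ R c d → Arc H D a b c d →
      (a = wi ∧ b = wj) ∨ (c = wi ∧ d = wj)) : In T wi wj := by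
  obtain ⟨u, hu, rfl, rfl⟩ := h1
  obtain ⟨v, hv, rfl, rfl⟩ := h2
  refine ⟨(⟨wi, hwi⟩, ⟨wj, hwj⟩), ?_, rfl, rfl⟩
  refine sep_mem hs hT hu hv (fun x => R x.1 x.2) hR1 hR2 ?_
  intro a b ha hb hab
  rcases hR _ _ _ _ a.1.2 a.2.2 b.1.2 b.2.2 ha hb hab with ⟨h, h'⟩ | ⟨h, h'⟩
  · left; exact pt_ext h h'
  · right; exact pt_ext h h'

theorem In.lip {T : Set (Fin n × Fin m)}
    (hT : DConvex (gA n m H D) T) {i j i' j' x y a b : ℕ} (h1 : In T i j) (h2 : In T i' j')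
    (w1 : Wk n m H D a i j x y) (w2 : Wk n m H D b x y i' j') (h : ℕ → ℕ → ℤ)
    (hh : ∀ a b c d, a < n → b < m → c < n → d < m → Arc H D a b c d → h c d ≤ h a b + 1)
    (hab : (a : ℤ) + b ≤ h i' j' - h i j) : In T x y := by
  obtain ⟨u, hu, rfl, rfl⟩ := h1
  obtain ⟨v, hv, rfl, rfl⟩ := h2
  obtain ⟨u1, v1, e1, ⟨rfl, rfl⟩, f, hf⟩ := w1
  obtain ⟨u2, v2, e3, e4, g, hg⟩ := w2
  rw [pt_ext e1.1 e1.2] at hf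
  rw [pt_ext e3.1 e3.2, pt_ext e4.1 e4.2] at hg
  exact ⟨v1, interval_mem hT hu hv hf hg (fun x => h x.1 x.2)
    (fun a b hab => hh _ _ _ _ a.1.2 a.2.2 b.1.2 b.2.2 hab) hab, rfl, rfl⟩

theorem In.manh {T : Set (Fin n × Fin m)}
    (hT : DConvex (gA n m H D) T) {i j i' j' x y a b : ℕ} (h1 : In T i j) (h2 : In T i' j')
    (w1 : Wk n m H D a i j x y) (w2 : Wk n m H D b x y i' j')
    (hab : a + b ≤ (i' - i) + (i - i') + ((j' - j) + (j - j'))) : In T x y := by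
  refine In.lip hT h1 h2 w1 w2
    (fun p q => |(p : ℤ) - i| + |(q : ℤ) - j|) ?_ ?_
  · intro a b c d _ _ _ _ h
    unfold Arc at h
    have : (|(c : ℤ) - i| ≤ |(a : ℤ) - i| + 1 ∧ d = b) ∨ (|(d : ℤ) - j| ≤ |(b : ℤ) - j| + 1 ∧ c = a) := by
      rcases h with ⟨h1, h2, h3⟩ | ⟨h1, h2, h3⟩ | ⟨h1, h2, h3⟩ | ⟨h1, h2, h3⟩
      · right; refine ⟨?_, h1.symm⟩; subst h2; push_cast; grind
      · right; refine ⟨?_, h1.symm⟩; subst h2; push_cast; grind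
      · left; refine ⟨?_, h1.symm⟩; subst h2; push_cast; grind
      · left; refine ⟨?_, h1.symm⟩; subst h2; push_cast; grind
    rcases this with ⟨h1, rfl⟩ | ⟨h1, rfl⟩ <;> linarith
  · simp only [sub_self, abs_zero, add_zero, sub_zero]
    have e1 : |(i' : ℤ) - i| = ((i' - i : ℕ) : ℤ) + ((i - i' : ℕ) : ℤ) := by
      rcases abs_cases ((i' : ℤ) - i) with h | h <;> omega
    have e2 : |(j' : ℤ) - j| = ((j' - j : ℕ) : ℤ) + ((j - j' : ℕ) : ℤ) := by
      rcases abs_cases ((j' : ℤ) - j) with h | h <;> omega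
    rw [e1, e2]
    omega

theorem convex_grid (S : ℕ → ℕ → Prop) (h : ℕ → ℕ → ℤ)
    (hne : ∃ i j, i < n ∧ j < m ∧ ¬ S i j)
    (hlip : ∀ a b c d, a < n → b < m → c < n → d < m → S a b → S c d → Arc H D a b c d →
      h c d ≤ h a b + 1)
    (hEE : ∀ x x' e e' s s' y y', x < n → x' < m → e < n → e' < m → s < n → s' < m → y < n →
      y' < m → ¬ S x x' → S e e' → Arc H D x x' e e' → S s s' → ¬ S y y' → Arc H D s s' y y' →
      ∃ k : ℕ, Wk n m H D k x x' y y' ∧ (k : ℤ) + h e e' ≤ h s s' + 1) :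
    DConvex (gA n m H D) {v | ¬ S v.1 v.2} := by
  refine convex_compl (fun v : Fin n × Fin m => S v.1 v.2) (fun v => h v.1 v.2) ?_ ?_ ?_
  · obtain ⟨i, j, hi, hj, hS⟩ := hne
    exact ⟨(⟨i, hi⟩, ⟨j, hj⟩), hS⟩
  · intro a b ha hb hab
    exact hlip _ _ _ _ a.1.2 a.2.2 b.1.2 b.2.2 ha hb hab
  · intro x e s y hx he hxe hs hy hsy
    obtain ⟨k, ⟨u, v, hu, hv, f, hf⟩, hk⟩ := hEE _ _ _ _ _ _ _ _ x.1.2 x.2.2 e.1.2 e.2.2 s.1.2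
      s.2.2 y.1.2 y.2.2 hx he hxe hs hy hsy
    rw [pt_ext hu.1 hu.2, pt_ext hv.1 hv.2] at hf
    exact ⟨k, f, hf, hk⟩

/-! ### Counting -/

theorem card_row {i lo hi : ℕ} (hin : i < n) (hh : hi ≤ m) :
    {v : Fin n × Fin m | (v.1 : ℕ) = i ∧ lo ≤ (v.2 : ℕ) ∧ (v.2 : ℕ) < hi}.ncard = hi - lo := by
  rw [← Nat.card_Ico, ← Set.ncard_coe_finset]
  refine Set.ncard_congr (fun v _ => (v.2 : ℕ)) ?_ ?_ ?_
  · rintro v ⟨_, h2, h3⟩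
    simpa using ⟨h2, h3⟩
  · rintro u v ⟨h1, _⟩ ⟨h2, _⟩ h
    exact pt_ext (by rw [h1, h2]) h
  · intro j hj
    simp only [Finset.coe_Ico, Set.mem_Ico] at hj
    exact ⟨(⟨i, hin⟩, ⟨j, by omega⟩), ⟨rfl, hj.1, hj.2⟩, rfl⟩

theorem card_three {i₁ l₁ h₁ i₂ l₂ h₂ i₃ l₃ h₃ : ℕ} (a₁ : i₁ < n) (b₁ : h₁ ≤ m) (a₂ : i₂ < n)
    (b₂ : h₂ ≤ m) (a₃ : i₃ < n) (b₃ : h₃ ≤ m) (d12 : i₁ ≠ i₂) (d13 : i₁ ≠ i₃) (d23 : i₂ ≠ i₃)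
    (S : ℕ → ℕ → Prop)
    (hS : ∀ i j, i < n → j < m → (S i j ↔ (i = i₁ ∧ l₁ ≤ j ∧ j < h₁) ∨ (i = i₂ ∧ l₂ ≤ j ∧ j < h₂) ∨
      (i = i₃ ∧ l₃ ≤ j ∧ j < h₃))) :
    {v : Fin n × Fin m | S v.1 v.2}.ncard = (h₁ - l₁) + ((h₂ - l₂) + (h₃ - l₃)) := by
  have : {v : Fin n × Fin m | S v.1 v.2} =
      {v : Fin n × Fin m | (v.1 : ℕ) = i₁ ∧ l₁ ≤ (v.2 : ℕ) ∧ (v.2 : ℕ) < h₁} ∪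
      ({v : Fin n × Fin m | (v.1 : ℕ) = i₂ ∧ l₂ ≤ (v.2 : ℕ) ∧ (v.2 : ℕ) < h₂} ∪
       {v : Fin n × Fin m | (v.1 : ℕ) = i₃ ∧ l₃ ≤ (v.2 : ℕ) ∧ (v.2 : ℕ) < h₃}) := by
    ext v
    simp only [Set.mem_ofPred_eq, Set.mem_union]
    exact hS _ _ v.1.2 v.2.2
  rw [this, Set.ncard_union_eq _ (Set.toFinite _) (Set.toFinite _),
    Set.ncard_union_eq _ (Set.toFinite _) (Set.toFinite _), card_row a₁ b₁, card_row a₂ b₂,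
    card_row a₃ b₃]
  · rw [Set.disjoint_left]
    rintro v ⟨h, _⟩ ⟨h', _⟩
    omega
  · rw [Set.disjoint_left]
    rintro v ⟨h, _⟩ (⟨h', _⟩ | ⟨h', _⟩) <;> omega

theorem card_compl (S : ℕ → ℕ → Prop) :
    {v : Fin n × Fin m | ¬ S v.1 v.2}.ncard = n * m - {v : Fin n × Fin m | S v.1 v.2}.ncard := by
  have := Set.ncard_compl {v : Fin n × Fin m | S v.1 v.2}
  rw [Nat.card_eq_fintype_card, Fintype.card_prod, Fintype.card_fin, Fintype.card_fin] at this
  exact this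

/-- The template: everything needed to conclude membership in the spectrum. -/
theorem template (H D : ℕ → ℕ → Prop) (S : ℕ → ℕ → Prop) {k : ℕ}
    (hs : StrongConnected (gA n m H D))
    (hC : DConvex (gA n m H D) {v : Fin n × Fin m | ¬ S v.1 v.2})
    (hcard : {v : Fin n × Fin m | S v.1 v.2}.ncard = k)
    (hS : ∃ i j, i < n ∧ j < m ∧ S i j)
    (hT : ∀ T : Set (Fin n × Fin m), DConvex (gA n m H D) T → (∃ i j, In T i j ∧ S i j) →
      (∀ i j, i < n → j < m → In T i j) ∨ T.ncard ≤ n * m - k) :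
    n * m - k ∈ strongConvexitySpectrum (gridGraph n m) := by
  refine ⟨gA n m H D, gA_orientation n m H D, hs, ?_⟩
  rw [← hcard, ← card_compl]
  refine convexityNumber_eq (fun v : Fin n × Fin m => S v.1 v.2) hC ?_ ?_
  · obtain ⟨i, j, hi, hj, h⟩ := hS
    exact ⟨(⟨i, hi⟩, ⟨j, hj⟩), h⟩
  · intro T hTc hTs
    obtain ⟨s, hsT, hsS⟩ := hTs
    rcases hT T hTc ⟨s.1, s.2, ⟨s, hsT, rfl, rfl⟩, hsS⟩ with h | h
    · left
      ext v
      simp only [Set.mem_univ, iff_true]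
      exact (h v.1 v.2 v.1.2 v.2.2).mem
    · right
      rw [card_compl, hcard]
      exact h

/-! ### First family of orientations -/

/-- Horizontal directions for the first family. -/
def HA (n p q i j : ℕ) : Prop := i + 1 ≠ n ∧ ¬ (i = 1 ∧ j + 1 = p) ∧ ¬ (i = 2 ∧ j + 1 = q)

/-- Vertical directions for the first family. -/
def DA (n m i j : ℕ) : Prop := j ≠ 0 ∧ (i + 2 = n → j + 1 = m)

/-- The deleted set for the first family. -/
def SA (p q i j : ℕ) : Prop := i = 0 ∨ (i = 1 ∧ p ≤ j) ∨ (i = 2 ∧ q ≤ j)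

theorem wkA_O {n m p q i j : ℕ} (hn : 4 ≤ n) (hp : 2 ≤ p) (hi : i + 1 < n) (hj1 : 1 ≤ j)
    (hj : j < m) : Wk n m (HA n p q) (DA n m) (i + j) 0 0 i j := by
  have w1 : Wk n m (HA n p q) (DA n m) (j - 0) 0 0 0 j :=
    Wk.right (by omega) hj (by omega) (by intro t _ _; unfold HA; omega)
  have w2 : Wk n m (HA n p q) (DA n m) (i - 0) 0 j i j :=
    Wk.down (by omega) hj (by omega) (by intro t _ _; unfold DA; omega)
  have := w1.trans w2
  rwa [show j - 0 + (i - 0) = i + j by omega] at this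

theorem wkA_z {n m p q i j : ℕ} (hn : 4 ≤ n) (hqm : q ≤ m) (hq5 : q < m → 5 ≤ n)
    (hi : i + 1 < n) (hj1 : 1 ≤ j) (hj : j < m) :
    Wk n m (HA n p q) (DA n m) ((n - 1 - i) + (m - 1 - j)) i j (n - 1) (m - 1) := by
  have w1 : Wk n m (HA n p q) (DA n m) (n - 2 - i) i j (n - 2) j :=
    Wk.down (by omega) hj (by omega) (by intro t _ _; unfold DA; omega)
  have w2 : Wk n m (HA n p q) (DA n m) (m - 1 - j) (n - 2) j (n - 2) (m - 1) :=
    Wk.right (by omega) (by omega) (by omega) (by intro t _ _; unfold HA; omega)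
  have w3 : Wk n m (HA n p q) (DA n m) ((n - 1) - (n - 2)) (n - 2) (m - 1) (n - 1) (m - 1) :=
    Wk.down (by omega) (by omega) (by omega) (by intro t _ _; unfold DA; omega)
  have := (w1.trans w2).trans w3
  rwa [show n - 2 - i + (m - 1 - j) + ((n - 1) - (n - 2)) = (n - 1 - i) + (m - 1 - j) by omega]
    at this

theorem wkA_bot {n m p q j j' : ℕ} (hn : 4 ≤ n) (hjj : j ≤ j') (hj : j' < m) :
    Wk n m (HA n p q) (DA n m) (j' - j) (n - 1) j' (n - 1) j :=
  Wk.left (by omega) (by omega) (by omega) (by intro t _ _; unfold HA; omega)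

theorem wkA_col {n m p q i i' : ℕ} (hm : 4 ≤ m) (hii : i ≤ i') (hi : i' < n) :
    Wk n m (HA n p q) (DA n m) (i' - i) i' 0 i 0 :=
  Wk.up (by omega) (by omega) (by omega) (by intro t _ _; unfold DA; omega)

theorem strongA {n m p q : ℕ} (hn : 4 ≤ n) (hm : 4 ≤ m) (hp : 2 ≤ p) (hqm : q ≤ m)
    (hq5 : q < m → 5 ≤ n) : StrongConnected (gA n m (HA n p q) (DA n m)) := by
  have hzc : ∃ k, Wk n m (HA n p q) (DA n m) k (n - 1) (m - 1) 0 0 :=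
    ⟨_, (wkA_bot hn (Nat.zero_le _) (by omega)).trans (wkA_col hm (Nat.zero_le _) (by omega))⟩
  have hOz : ∃ k, Wk n m (HA n p q) (DA n m) k 0 0 (n - 1) (m - 1) :=
    ⟨_, (wkA_O (i := 0) (j := 1) hn hp (by omega) le_rfl (by omega)).trans
      (wkA_z hn hqm hq5 (by omega) (by omega) (by omega))⟩
  obtain ⟨k1, hk1⟩ := hzc
  obtain ⟨k2, hk2⟩ := hOz
  refine strong_of_hub (a := 0) (b := 0) ?_ ?_
  · intro i j hi hj
    by_cases h1 : i + 1 < n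
    · by_cases h2 : 1 ≤ j
      · exact ⟨_, (wkA_z hn hqm hq5 h1 h2 hj).trans hk1⟩
      · obtain rfl : j = 0 := by omega
        exact ⟨_, wkA_col hm (Nat.zero_le _) hi⟩
    · obtain rfl : i = n - 1 := by omega
      exact ⟨_, (wkA_bot hn (Nat.zero_le _) hj).trans (wkA_col hm (Nat.zero_le _) (by omega))⟩
  · intro i j hi hj
    by_cases h1 : i + 1 < n
    · by_cases h2 : 1 ≤ j
      · exact ⟨_, wkA_O hn hp h1 h2 hj⟩
      · obtain rfl : j = 0 := by omega
        exact ⟨_, (hk2.trans (wkA_bot hn (Nat.zero_le _) (by omega))).trans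
          (wkA_col hm (by omega) (by omega))⟩
    · obtain rfl : i = n - 1 := by omega
      exact ⟨_, hk2.trans (wkA_bot hn (by omega) (by omega))⟩

theorem convexA {n m p q : ℕ} (hn : 4 ≤ n) (hm : 4 ≤ m) (hp : 2 ≤ p) (hpq : p ≤ q)
    (hqm : q ≤ m) (hq5 : q < m → 5 ≤ n) :
    DConvex (gA n m (HA n p q) (DA n m)) {v : Fin n × Fin m | ¬ SA p q v.1 v.2} := by
  refine convex_grid (SA p q) (fun i j => (i : ℤ) + j) ⟨1, 0, by omega, by omega, ?_⟩ ?_ ?_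
  · unfold SA; omega
  · intro a b c d ha hb hc hd h1 h2 h3
    unfold Arc at h3
    omega
  · intro x x' e e' s s' y y' hx hx' he he' hs hs' hy hy' hSx hSe h1 hSs hSy h2
    have hx1 : x = 1 ∧ x' = 0 ∧ e = 0 ∧ e' = 0 := by
      unfold Arc HA DA SA at *; omega
    obtain ⟨rfl, rfl, rfl, rfl⟩ := hx1
    have hyc : 1 ≤ y' ∧ 1 ≤ y ∧ y + 1 < n ∧ y + y' ≤ s + s' + 1 := by
      unfold Arc HA DA SA at *; omega
    obtain ⟨hy1, hy2, hy3, hy4⟩ := hyc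
    have w1 : Wk n m (HA n p q) (DA n m) (1 - 0) 1 0 1 1 :=
      Wk.right (by omega) (by omega) (by omega) (by intro t _ _; unfold HA; omega)
    have w2 : Wk n m (HA n p q) (DA n m) (y - 1) 1 1 y 1 :=
      Wk.down (by omega) (by omega) (by omega) (by intro t _ _; unfold DA; omega)
    have w3 : Wk n m (HA n p q) (DA n m) (y' - 1) y 1 y y' :=
      Wk.right (by omega) (by omega) (by omega)
        (by intro t _ _; unfold SA at hSy; unfold HA; omega)
    exact ⟨_, (w1.trans w2).trans w3, by push_cast; omega⟩

set_option maxHeartbeats 4000000 in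
theorem hullA {n m p q : ℕ} (hn : 4 ≤ n) (hm : 4 ≤ m) (hp : 2 ≤ p) (hpq : p ≤ q)
    (hqm : q ≤ m) (hq5 : q < m → 5 ≤ n) {T : Set (Fin n × Fin m)}
    (hT : DConvex (gA n m (HA n p q) (DA n m)) T) {s s' t t' : ℕ} (hs : In T s s')
    (hSs : SA p q s s') (ht : In T t t') (hst : ¬ (s = t ∧ s' = t')) :
    ∀ i j, i < n → j < m → In T i j := by
  have hstr := strongA hn hm hp hqm hq5
  have hO : In T 0 0 := by
    by_cases hs0 : s = 0 ∧ s' = 0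
    · obtain ⟨rfl, rfl⟩ := hs0; exact hs
    by_cases ht0 : t = 0 ∧ t' = 0
    · obtain ⟨rfl, rfl⟩ := ht0; exact ht
    by_cases hB : SA p q t t' ∧ t ≤ s ∧ t' ≤ s'
    · refine In.sep hstr hT hs ht (fun a b => ¬ (SA p q a b ∧ a ≤ t ∧ b ≤ t' ∧ ¬ (a = 0 ∧ b = 0)))
        0 0 (by omega) (by omega) (by omega) ?_ ?_
      · push Not; exact ⟨hB.1, le_rfl, le_rfl, by omega⟩
      · intro a b c d ha hb hc hd h1 h2 h3
        unfold Arc HA DA SA at *; rcases h3 with ⟨rfl, rfl, h5⟩ | ⟨rfl, rfl, h5⟩ | ⟨rfl, rfl, h5⟩ | ⟨rfl, rfl, h5⟩ <;> omega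
    · refine In.sep hstr hT ht hs (fun a b => ¬ (SA p q a b ∧ a ≤ s ∧ b ≤ s' ∧ ¬ (a = 0 ∧ b = 0)))
        0 0 (by omega) (by omega) (by tauto) ?_ ?_
      · push Not; exact ⟨hSs, le_rfl, le_rfl, by omega⟩
      · intro a b c d ha hb hc hd h1 h2 h3
        unfold Arc HA DA SA at *; rcases h3 with ⟨rfl, rfl, h5⟩ | ⟨rfl, rfl, h5⟩ | ⟨rfl, rfl, h5⟩ | ⟨rfl, rfl, h5⟩ <;> omega
  have hE : In T 1 0 := by
    have hw : ∃ w w', In T w w' ∧ ¬ (w = 0 ∧ w' = 0) := by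
      by_cases hs0 : s = 0 ∧ s' = 0
      · exact ⟨t, t', ht, by omega⟩
      · exact ⟨s, s', hs, hs0⟩
    obtain ⟨w, w', hw, hw0⟩ := hw
    refine In.sep hstr hT hw hO (fun a b => ¬ (a = 0 ∧ b = 0)) 1 0 (by omega) (by omega) hw0
      (by simp) ?_
    intro a b c d ha hb hc hd h1 h2 h3
    unfold Arc HA DA at *; rcases h3 with ⟨rfl, rfl, h5⟩ | ⟨rfl, rfl, h5⟩ | ⟨rfl, rfl, h5⟩ | ⟨rfl, rfl, h5⟩ <;> omega
  have hz : In T (n - 1) (m - 1) := by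
    refine In.sep hstr hT hO hE (fun a b => (a + 1 < n ∧ 1 ≤ b) ∨ (a = 0 ∧ b = 0)) (n - 1) (m - 1)
      (by omega) (by omega) (by omega) (by omega) ?_
    intro a b c d ha hb hc hd h1 h2 h3
    unfold Arc HA DA at *; rcases h3 with ⟨rfl, rfl, h5⟩ | ⟨rfl, rfl, h5⟩ | ⟨rfl, rfl, h5⟩ | ⟨rfl, rfl, h5⟩ <;> omega
  intro i j hi hj
  by_cases h1 : i + 1 < n
  · by_cases h2 : 1 ≤ j
    · exact In.manh hT hO hz (wkA_O hn hp h1 h2 hj) (wkA_z hn hqm hq5 h1 h2 hj) (by omega)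
    · obtain rfl : j = 0 := by omega
      by_cases hi0 : i = 0
      · subst hi0; exact hO
      refine In.sep hstr hT hz hO
        (fun a b => (a + 1 < n ∧ 1 ≤ b) ∨ a + 1 = n ∨ (b = 0 ∧ i < a)) i 0
        (by omega) (by omega) (by omega) (by omega) ?_
      intro a b c d ha hb hc hd h1 h2 h3
      unfold Arc HA DA at *; rcases h3 with ⟨rfl, rfl, h5⟩ | ⟨rfl, rfl, h5⟩ | ⟨rfl, rfl, h5⟩ | ⟨rfl, rfl, h5⟩ <;> omega
  · obtain rfl : i = n - 1 := by omega
    by_cases hjm : j = m - 1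
    · subst hjm; exact hz
    refine In.sep hstr hT hz hO
      (fun a b => (a + 1 < n ∧ 1 ≤ b) ∨ (a + 1 = n ∧ j < b)) (n - 1) j
      (by omega) (by omega) (by omega) (by omega) ?_
    intro a b c d ha hb hc hd h1 h2 h3
    unfold Arc HA DA at *; rcases h3 with ⟨rfl, rfl, h5⟩ | ⟨rfl, rfl, h5⟩ | ⟨rfl, rfl, h5⟩ | ⟨rfl, rfl, h5⟩ <;> omega

theorem famA {n m p q k : ℕ} (hn : 4 ≤ n) (hm : 4 ≤ m) (hp : 2 ≤ p) (hpq : p ≤ q)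
    (hqm : q ≤ m) (hq5 : q < m → 5 ≤ n) (hk : k = m + (m - p) + (m - q)) :
    n * m - k ∈ strongConvexitySpectrum (gridGraph n m) := by
  refine template (HA n p q) (DA n m) (SA p q) (strongA hn hm hp hqm hq5)
    (convexA hn hm hp hpq hqm hq5) ?_ ⟨0, 0, by omega, by omega, Or.inl rfl⟩ ?_
  · rw [card_three (i₁ := 0) (l₁ := 0) (h₁ := m) (i₂ := 1) (l₂ := p) (h₂ := m) (i₃ := 2)
      (l₃ := q) (h₃ := m) (by omega) (by omega) (by omega) (by omega) (by omega) (by omega)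
      (by omega) (by omega) (by omega) (SA p q) ?_]
    · omega
    · intro i j hi hj
      unfold SA; omega
  · rintro T hT ⟨s, s', hs, hSs⟩
    by_cases h : ∃ t t', In T t t' ∧ ¬ (s = t ∧ s' = t')
    · obtain ⟨t, t', ht, hst⟩ := h
      exact Or.inl (hullA hn hm hp hpq hqm hq5 hT hs hSs ht hst)
    · right
      have h1 : T.ncard ≤ 1 := by
        rw [Set.ncard_le_one (Set.toFinite _)]
        intro a ha b hb
        push Not at h
        have h1 := h a.1 a.2 ⟨a, ha, rfl, rfl⟩
        have h2 := h b.1 b.2 ⟨b, hb, rfl, rfl⟩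
        exact pt_ext (by omega) (by omega)
      have h2 : 4 * m ≤ n * m := Nat.mul_le_mul_right m hn
      omega

/-! ### Second family of orientations -/

/-- Horizontal directions for the second family. -/
def HB (n i j : ℕ) : Prop := (i = 0 ∧ j ≠ 1) ∨ (i = 1 ∧ j ≠ 0) ∨ (2 ≤ i ∧ i + 1 < n)

/-- Vertical directions for the second family. -/
def DB (n m a b i j : ℕ) : Prop :=
  (i = 0 ∧ j ≠ 0 ∧ j ≠ 2 ∧ j ≠ a) ∨ (i = 1 ∧ j ≠ 0 ∧ j ≠ b) ∨
    (2 ≤ i ∧ j ≠ 0 ∧ (i + 2 = n → j + 1 = m))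

/-- The deleted set for the second family. -/
def SB (a b i j : ℕ) : Prop := (i = 0 ∧ j < a) ∨ (i = 1 ∧ j < b)

/-- Distance potential on the deleted set for the second family. -/
def potB (i j : ℕ) : ℤ :=
  if i = 1 then (if j = 0 then 0 else j + 2) else (if j ≤ 1 then j + 1 else j + 3)

/-- Auxiliary potential certifying the distance from `(1,1)` to `(0,1)`. -/
def potB' (i j : ℕ) : ℤ :=
  if i = 1 ∧ j = 1 then 0 else if i = 0 then (if j = 1 then 3 else if j ≤ 2 then 2 else 1) else 1

theorem wkB_low {n m a b i j : ℕ} (hi2 : 2 ≤ i) (hi : i + 1 < n)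
    (hj1 : 1 ≤ j) (hj : j < m) : Wk n m (HB n) (DB n m a b) (i - 2 + j) 2 0 i j := by
  have w1 : Wk n m (HB n) (DB n m a b) (j - 0) 2 0 2 j :=
    Wk.right (by omega) hj (by omega) (by intro t _ _; unfold HB; omega)
  have w2 : Wk n m (HB n) (DB n m a b) (i - 2) 2 j i j :=
    Wk.down (by omega) hj (by omega) (by intro t _ _; unfold DB; omega)
  have := w1.trans w2
  rwa [show j - 0 + (i - 2) = i - 2 + j by omega] at this

theorem wkB_z {n m a b i j : ℕ} (hn : 4 ≤ n) (hi2 : 2 ≤ i) (hi : i + 1 < n)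
    (hj1 : 1 ≤ j) (hj : j < m) :
    Wk n m (HB n) (DB n m a b) ((n - 1 - i) + (m - 1 - j)) i j (n - 1) (m - 1) := by
  have w1 : Wk n m (HB n) (DB n m a b) (n - 2 - i) i j (n - 2) j :=
    Wk.down (by omega) hj (by omega) (by intro t _ _; unfold DB; omega)
  have w2 : Wk n m (HB n) (DB n m a b) (m - 1 - j) (n - 2) j (n - 2) (m - 1) :=
    Wk.right (by omega) (by omega) (by omega) (by intro t _ _; unfold HB; omega)
  have w3 : Wk n m (HB n) (DB n m a b) ((n - 1) - (n - 2)) (n - 2) (m - 1) (n - 1) (m - 1) :=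
    Wk.down (by omega) (by omega) (by omega) (by intro t _ _; unfold DB; omega)
  have := (w1.trans w2).trans w3
  rwa [show n - 2 - i + (m - 1 - j) + ((n - 1) - (n - 2)) = (n - 1 - i) + (m - 1 - j) by omega]
    at this

/-- Rows `0` and `1` to the sink. -/
theorem wkB_top {n m a b i j : ℕ} (hn : 4 ≤ n) (hm : 4 ≤ m) (hb : 3 ≤ b) (hba : b ≤ a)
    (ham : a + 2 ≤ m) (hi2 : i < 2) (hj1 : 2 ≤ i + j) (hj : j < m) :
    Wk n m (HB n) (DB n m a b) ((n - 1 - i) + (m - 1 - j)) i j (n - 1) (m - 1) := by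
  have w2 : Wk n m (HB n) (DB n m a b) (m - 1 - j) i j i (m - 1) :=
    Wk.right (by omega) (by omega) (by omega) (by intro t _ _; unfold HB; omega)
  have w3 : Wk n m (HB n) (DB n m a b) ((n - 1) - i) i (m - 1) (n - 1) (m - 1) :=
    Wk.down (by omega) (by omega) (by omega) (by intro t _ _; unfold DB; omega)
  have := w2.trans w3
  rwa [show (m - 1 - j) + ((n - 1) - i) = (n - 1 - i) + (m - 1 - j) by omega]
    at this

theorem wkB_bot {n m a b j j' : ℕ} (hn : 4 ≤ n) (hjj : j ≤ j') (hj : j' < m) :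
    Wk n m (HB n) (DB n m a b) (j' - j) (n - 1) j' (n - 1) j :=
  Wk.left (by omega) (by omega) (by omega) (by intro t _ _; unfold HB; omega)

theorem wkB_col {n m a b i i' : ℕ} (hm : 4 ≤ m) (hii : i ≤ i') (hi : i' < n) :
    Wk n m (HB n) (DB n m a b) (i' - i) i' 0 i 0 :=
  Wk.up (by omega) (by omega) (by omega) (by intro t _ _; unfold DB; omega)

theorem strongB {n m a b : ℕ} (hn : 4 ≤ n) (hm : 4 ≤ m) (hb : 3 ≤ b) (hba : b ≤ a)
    (ham : a + 2 ≤ m) : StrongConnected (gA n m (HB n) (DB n m a b)) := by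
  obtain ⟨k0, hk0⟩ : ∃ k, Wk n m (HB n) (DB n m a b) k (n - 1) (m - 1) (n - 1) 0 :=
    ⟨_, wkB_bot hn (Nat.zero_le _) (by omega)⟩
  obtain ⟨k1, hk1⟩ : ∃ k, Wk n m (HB n) (DB n m a b) k (n - 1) (m - 1) 1 0 :=
    ⟨_, hk0.trans (wkB_col hm (by omega) (by omega))⟩
  have c1 : Wk n m (HB n) (DB n m a b) 1 1 0 0 0 :=
    Wk.arc (by omega) (by omega) (by omega) (by omega) (by unfold Arc HB DB; omega)
  have c2 : Wk n m (HB n) (DB n m a b) 1 0 0 0 1 :=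
    Wk.arc (by omega) (by omega) (by omega) (by omega) (by unfold Arc HB DB; omega)
  have c3 : Wk n m (HB n) (DB n m a b) 1 0 1 1 1 :=
    Wk.arc (by omega) (by omega) (by omega) (by omega) (by unfold Arc HB DB; omega)
  have c4 : Wk n m (HB n) (DB n m a b) 1 1 1 1 0 :=
    Wk.arc (by omega) (by omega) (by omega) (by omega) (by unfold Arc HB DB; omega)
  have c5 : Wk n m (HB n) (DB n m a b) 1 1 2 0 2 :=
    Wk.arc (by omega) (by omega) (by omega) (by omega) (by unfold Arc HB DB; omega)
  have c6 := (c1.trans c2).trans c3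
  have row1 : ∀ j, 1 ≤ j → j < m → ∃ k, Wk n m (HB n) (DB n m a b) k 1 0 1 j := by
    intro j h1 h2
    exact ⟨_, c6.trans (Wk.right (by omega) h2 h1 (by intro t _ _; unfold HB; omega))⟩
  obtain ⟨k2, hk2⟩ : ∃ k, Wk n m (HB n) (DB n m a b) k 1 0 (n - 1) (m - 1) := by
    obtain ⟨k, hk⟩ := row1 1 le_rfl (by omega)
    exact ⟨_, hk.trans (wkB_top hn hm hb hba ham (by omega) (by omega) (by omega))⟩
  refine strong_of_hub (a := 1) (b := 0) ?_ ?_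
  · intro i j hi hj
    by_cases h0 : i < 2
    · by_cases h2 : 2 ≤ i + j
      · exact ⟨_, (wkB_top hn hm hb hba ham h0 h2 hj).trans hk1⟩
      · have : (i = 0 ∧ j = 0) ∨ (i = 0 ∧ j = 1) ∨ (i = 1 ∧ j = 0) := by omega
        rcases this with ⟨rfl, rfl⟩ | ⟨rfl, rfl⟩ | ⟨rfl, rfl⟩
        · exact ⟨_, (c2.trans c3).trans c4⟩
        · exact ⟨_, c3.trans c4⟩
        · exact ⟨_, Wk.refl hi hj⟩
    · by_cases h1 : i + 1 < n
      · by_cases h2 : 1 ≤ j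
        · exact ⟨_, (wkB_z hn (by omega) h1 h2 hj).trans hk1⟩
        · obtain rfl : j = 0 := by omega
          exact ⟨_, wkB_col hm (by omega) hi⟩
      · obtain rfl : i = n - 1 := by omega
        exact ⟨_, (wkB_bot hn (Nat.zero_le _) hj).trans (wkB_col hm (by omega) (by omega))⟩
  · intro i j hi hj
    by_cases hj0 : j = 0
    · subst hj0
      exact ⟨_, (hk2.trans hk0).trans (wkB_col hm (by omega) (by omega))⟩
    by_cases h0 : i < 2
    · by_cases h2 : i = 1
      · subst h2
        exact row1 j (by omega) hj
      · obtain rfl : i = 0 := by omega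
        by_cases h3 : j = 1
        · subst h3
          exact ⟨_, c1.trans c2⟩
        · obtain ⟨k, hk⟩ := row1 2 (by omega) (by omega)
          exact ⟨_, (hk.trans c5).trans (Wk.right (by omega) hj (by omega)
            (by intro t _ _; unfold HB; omega))⟩
    · by_cases h1 : i + 1 < n
      · exact ⟨_, ((hk2.trans hk0).trans (wkB_col hm (i := 2) (by omega) (by omega))).trans
          (wkB_low (by omega) h1 (by omega) hj)⟩
      · obtain rfl : i = n - 1 := by omega
        exact ⟨_, hk2.trans (wkB_bot hn (by omega) (by omega))⟩

set_option maxHeartbeats 4000000 in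
theorem convexB {n m a b : ℕ} (hn : 4 ≤ n) (hm : 4 ≤ m) (hb : 3 ≤ b) (hba : b ≤ a)
    (hab : a ≤ b + 1) (ham : a + 2 ≤ m) :
    DConvex (gA n m (HB n) (DB n m a b)) {v : Fin n × Fin m | ¬ SB a b v.1 v.2} := by
  refine convex_grid (SB a b) potB ⟨2, 0, by omega, by omega, ?_⟩ ?_ ?_
  · unfold SB; omega
  · intro i j c d ha hb hc hd h1 h2 h3
    unfold Arc HB DB SB potB at *
    rcases h3 with ⟨h3, h4, h5⟩ | ⟨h3, h4, h5⟩ | ⟨h3, h4, h5⟩ | ⟨h3, h4, h5⟩ <;>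
      split_ifs <;> omega
  · intro x x' e e' s s' y y' hx hx' he he' hs hs' hy hy' hSx hSe h1 hSs hSy h2
    have hx1 : x = 2 ∧ x' = 0 ∧ e = 1 ∧ e' = 0 := by
      unfold Arc HB DB SB at *; omega
    obtain ⟨rfl, rfl, rfl, rfl⟩ := hx1
    have hyc : (y = 2 ∧ 1 ≤ y' ∧ s = 1 ∧ s' = y') ∨ (y = 1 ∧ y' = b ∧ s = 1 ∧ s' + 1 = b) ∨
        (y = 1 ∧ y' = b ∧ s = 0 ∧ s' = b) ∨ (y = 0 ∧ y' = a ∧ s = 0 ∧ s' + 1 = a) := by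
      clear h1 hSe hSx
      unfold Arc HB DB SB at *
      rcases h2 with ⟨rfl, rfl, h5⟩ | ⟨rfl, rfl, h5⟩ | ⟨rfl, rfl, h5⟩ | ⟨rfl, rfl, h5⟩ <;> omega
    have w1 : Wk n m (HB n) (DB n m a b) (b - 0) 2 0 2 b :=
      Wk.right (by omega) (by omega) (by omega) (by intro t _ _; unfold HB; omega)
    have w2 : Wk n m (HB n) (DB n m a b) 1 2 b 1 b :=
      Wk.arc (by omega) (by omega) (by omega) (by omega) (by unfold Arc HB DB; omega)
    have w3 : Wk n m (HB n) (DB n m a b) (a - b) 1 b 1 a :=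
      Wk.right (by omega) (by omega) (by omega) (by intro t _ _; unfold HB; omega)
    have w4 : Wk n m (HB n) (DB n m a b) 1 1 a 0 a :=
      Wk.arc (by omega) (by omega) (by omega) (by omega) (by unfold Arc HB DB; omega)
    rcases hyc with ⟨rfl, h3, rfl, rfl⟩ | ⟨rfl, rfl, rfl, h3⟩ | ⟨rfl, rfl, rfl, rfl⟩ |
      ⟨rfl, rfl, rfl, h3⟩
    · refine ⟨_, Wk.right (j := 0) (by omega) (by omega) (by omega)
        (by intro t _ _; unfold HB; omega), ?_⟩
      unfold potB
      push_cast
      split_ifs <;> omega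
    · refine ⟨_, w1.trans w2, ?_⟩
      unfold potB
      push_cast
      split_ifs <;> omega
    · refine ⟨_, w1.trans w2, ?_⟩
      unfold potB
      push_cast
      split_ifs <;> omega
    · refine ⟨_, ((w1.trans w2).trans w3).trans w4, ?_⟩
      unfold potB
      push_cast
      split_ifs <;> omega

set_option maxHeartbeats 8000000 in
theorem hullB {n m a b : ℕ} (hn : 4 ≤ n) (hm : 4 ≤ m) (hb : 3 ≤ b) (hba : b ≤ a)
    (hab : a ≤ b + 1) (ham : a + 2 ≤ m) {T : Set (Fin n × Fin m)}
    (hT : DConvex (gA n m (HB n) (DB n m a b)) T) {s s' t t' : ℕ} (hs : In T s s')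
    (hSs : SB a b s s') (ht : In T t t') (hSt : ¬ SB a b t t') :
    ∀ i j, i < n → j < m → In T i j := by
  have hstr := strongB hn hm hb hba ham
  have hE : In T 1 0 := by
    refine In.sep hstr hT ht hs (fun c d => ¬ SB a b c d) 1 0 (by omega) (by omega) hSt
      (not_not.2 hSs) ?_
    intro i j c d ha hb hc hd h1 h2 h3
    clear hSs hSt
    unfold Arc HB DB SB at *
    rcases h3 with ⟨rfl, rfl, h5⟩ | ⟨rfl, rfl, h5⟩ | ⟨rfl, rfl, h5⟩ | ⟨rfl, rfl, h5⟩ <;> omega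
  have hX : In T 2 0 := by
    refine In.sep hstr hT ht hs (fun c d => ¬ SB a b c d) 2 0 (by omega) (by omega) hSt
      (not_not.2 hSs) ?_
    intro i j c d ha hb hc hd h1 h2 h3
    clear hSs hSt
    unfold Arc HB DB SB at *
    rcases h3 with ⟨rfl, rfl, h5⟩ | ⟨rfl, rfl, h5⟩ | ⟨rfl, rfl, h5⟩ | ⟨rfl, rfl, h5⟩ <;> omega
  clear hSs hSt hs ht
  have h00 : In T 0 0 := by
    refine In.sep hstr hT hE hX (fun c d => c = 1 ∧ d = 0) 0 0 (by omega) (by omega) (by omega)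
      (by omega) ?_
    intro i j c d ha hb hc hd h1 h2 h3
    unfold Arc HB DB at *
    rcases h3 with ⟨rfl, rfl, h5⟩ | ⟨rfl, rfl, h5⟩ | ⟨rfl, rfl, h5⟩ | ⟨rfl, rfl, h5⟩ <;> omega
  have h01 : In T 0 1 := by
    refine In.sep hstr hT hE hX (fun c d => c ≤ 1 ∧ d = 0) 0 1 (by omega) (by omega) (by omega)
      (by omega) ?_
    intro i j c d ha hb hc hd h1 h2 h3
    unfold Arc HB DB at *
    rcases h3 with ⟨rfl, rfl, h5⟩ | ⟨rfl, rfl, h5⟩ | ⟨rfl, rfl, h5⟩ | ⟨rfl, rfl, h5⟩ <;> omega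
  have h11 : In T 1 1 := by
    refine In.sep hstr hT hE hX (fun c d => (c ≤ 1 ∧ d = 0) ∨ (c = 0 ∧ d = 1)) 1 1 (by omega)
      (by omega) (by omega) (by omega) ?_
    intro i j c d ha hb hc hd h1 h2 h3
    unfold Arc HB DB at *
    rcases h3 with ⟨rfl, rfl, h5⟩ | ⟨rfl, rfl, h5⟩ | ⟨rfl, rfl, h5⟩ | ⟨rfl, rfl, h5⟩ <;> omega
  have v1 : Wk n m (HB n) (DB n m a b) 1 1 1 1 2 :=
    Wk.arc (by omega) (by omega) (by omega) (by omega) (by unfold Arc HB DB; omega)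
  have v2 : Wk n m (HB n) (DB n m a b) 1 1 2 0 2 :=
    Wk.arc (by omega) (by omega) (by omega) (by omega) (by unfold Arc HB DB; omega)
  have v3 : Wk n m (HB n) (DB n m a b) 1 0 2 0 1 :=
    Wk.arc (by omega) (by omega) (by omega) (by omega) (by unfold Arc HB DB; omega)
  have hlip : ∀ i j c d, i < n → j < m → c < n → d < m → Arc (HB n) (DB n m a b) i j c d →
      potB' c d ≤ potB' i j + 1 := by
    intro i j c d ha hb hc hd h3
    unfold Arc HB DB potB' at *
    rcases h3 with ⟨h3, h4, h5⟩ | ⟨h3, h4, h5⟩ | ⟨h3, h4, h5⟩ | ⟨h3, h4, h5⟩ <;>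
      split_ifs <;> omega
  have h12 : In T 1 2 := In.lip hT h11 h01 v1 (v2.trans v3) potB' hlip (by decide)
  have h02 : In T 0 2 := In.lip hT h11 h01 (v1.trans v2) v3 potB' hlip (by decide)
  have hz : In T (n - 1) (m - 1) := by
    refine In.sep hstr hT hE hX (fun a b => (a + 1 < n ∧ 1 ≤ b) ∨ (a ≤ 1 ∧ b = 0)) (n - 1) (m - 1)
      (by omega) (by omega) (by omega) (by omega) ?_
    intro i j c d ha hb hc hd h1 h2 h3
    unfold Arc HB DB at *
    rcases h3 with ⟨rfl, rfl, h5⟩ | ⟨rfl, rfl, h5⟩ | ⟨rfl, rfl, h5⟩ | ⟨rfl, rfl, h5⟩ <;> omega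
  intro i j hi hj
  by_cases hi2 : i < 2
  · by_cases hs1 : i = 1
    · subst hs1
      by_cases hj0 : j = 0
      · subst hj0; exact hE
      by_cases hj1 : j = 1
      · subst hj1; exact h11
      exact In.manh hT h12 hz (Wk.right (by omega) hj (by omega)
        (by intro t _ _; unfold HB; omega)) (wkB_top hn hm hb hba ham hi2 (by omega) hj)
        (by omega)
    · obtain rfl : i = 0 := by omega
      by_cases hj0 : j = 0
      · subst hj0; exact h00
      by_cases hj1 : j = 1
      · subst hj1; exact h01
      exact In.manh hT h02 hz (Wk.right (by omega) hj (by omega)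
        (by intro t _ _; unfold HB; omega)) (wkB_top hn hm hb hba ham hi2 (by omega) hj)
        (by omega)
  by_cases h1 : i + 1 < n
  · by_cases h2 : 1 ≤ j
    · exact In.manh hT hX hz (wkB_low (by omega) h1 h2 hj) (wkB_z hn (by omega) h1 h2 hj)
        (by omega)
    · obtain rfl : j = 0 := by omega
      by_cases hi0 : i = 2
      · subst hi0; exact hX
      refine In.sep hstr hT hz hX
        (fun c d => (c + 1 < n ∧ 1 ≤ d ∧ ¬ SB a b c d) ∨ c + 1 = n ∨ (d = 0 ∧ i < c)) i 0
        (by omega) (by omega) (by omega) (by omega) ?_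
      intro i j c d ha hb hc hd h1 h2 h3
      unfold Arc HB DB SB at *
      rcases h3 with ⟨rfl, rfl, h5⟩ | ⟨rfl, rfl, h5⟩ | ⟨rfl, rfl, h5⟩ | ⟨rfl, rfl, h5⟩ <;> omega
  · obtain rfl : i = n - 1 := by omega
    by_cases hjm : j = m - 1
    · subst hjm; exact hz
    refine In.sep hstr hT hz hX
      (fun c d => (c + 1 < n ∧ 1 ≤ d ∧ ¬ SB a b c d) ∨ (c + 1 = n ∧ j < d)) (n - 1) j
      (by omega) (by omega) (by omega) (by omega) ?_
    intro i j c d ha hb hc hd h1 h2 h3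
    unfold Arc HB DB SB at *
    rcases h3 with ⟨rfl, rfl, h5⟩ | ⟨rfl, rfl, h5⟩ | ⟨rfl, rfl, h5⟩ | ⟨rfl, rfl, h5⟩ <;> omega

theorem famB {n m a b k : ℕ} (hn : 4 ≤ n) (hm : 4 ≤ m) (hb : 3 ≤ b) (hba : b ≤ a)
    (hab : a ≤ b + 1) (ham : a + 2 ≤ m) (hk : k = a + b) :
    n * m - k ∈ strongConvexitySpectrum (gridGraph n m) := by
  have hcard : {v : Fin n × Fin m | SB a b v.1 v.2}.ncard = k := by
    rw [card_three (i₁ := 0) (l₁ := 0) (h₁ := a) (i₂ := 1) (l₂ := 0) (h₂ := b) (i₃ := 2)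
      (l₃ := 0) (h₃ := 0) (by omega) (by omega) (by omega) (by omega) (by omega) (by omega)
      (by omega) (by omega) (by omega) (SB a b) ?_]
    · omega
    · intro i j hi hj
      unfold SB; omega
  refine template (HB n) (DB n m a b) (SB a b) (strongB hn hm hb hba ham)
    (convexB hn hm hb hba hab ham) hcard ⟨0, 0, by omega, by omega, Or.inl ⟨rfl, by omega⟩⟩ ?_
  rintro T hT ⟨s, s', hs, hSs⟩
  by_cases h : ∃ t t', In T t t' ∧ ¬ SB a b t t'
  · obtain ⟨t, t', ht, hst⟩ := h
    exact Or.inl (hullB hn hm hb hba hab ham hT hs hSs ht hst)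
  · right
    push Not at h
    have h1 : T.ncard ≤ k := by
      rw [← hcard]
      exact Set.ncard_le_ncard (fun v hv => h v.1 v.2 ⟨v, hv, rfl, rfl⟩) (Set.toFinite _)
    have h2 : 4 * m ≤ n * m := Nat.mul_le_mul_right m hn
    omega

/-! ### Third family of orientations (four rows) -/

/-- Horizontal directions for the third family. -/
def HC (i j : ℕ) : Prop := i = 0 ∨ ((i = 1 ∨ i = 2) ∧ j ≠ 0)

/-- Vertical directions for the third family. -/
def DC (m i j : ℕ) : Prop :=
  (i = 0 ∧ j ≠ 0) ∨ (i = 1 ∧ j ≠ 0 ∧ j + 3 ≠ m) ∨ (i = 2 ∧ j + 1 = m)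

/-- The deleted set for the third family. -/
def SC (m i j : ℕ) : Prop := i = 0 ∨ j = 0 ∨ (i = 1 ∧ j + 3 < m)

/-- Distance potential on the deleted set for the third family. -/
def potC (i j : ℕ) : ℤ := if j = 0 then 3 - i else 3 + i + j

/-- Rows `0`, `1`, `2` to the sink along the last column. -/
theorem wkC_z {m i j : ℕ} (hm : 4 ≤ m) (hi : i < 3) (hij : i = 0 ∨ 1 ≤ j) (hj : j < m) :
    Wk 4 m HC (DC m) ((3 - i) + (m - 1 - j)) i j 3 (m - 1) := by
  have w2 : Wk 4 m HC (DC m) (m - 1 - j) i j i (m - 1) :=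
    Wk.right (by omega) (by omega) (by omega) (by intro t _ _; unfold HC; omega)
  have w3 : Wk 4 m HC (DC m) (3 - i) i (m - 1) 3 (m - 1) :=
    Wk.down (by omega) (by omega) (by omega) (by intro t _ _; unfold DC; omega)
  have := w2.trans w3
  rwa [add_comm] at this

theorem wkC_bot {m j j' : ℕ} (hjj : j ≤ j') (hj : j' < m) :
    Wk 4 m HC (DC m) (j' - j) 3 j' 3 j :=
  Wk.left (by omega) (by omega) (by omega) (by intro t _ _; unfold HC; omega)

theorem wkC_col {m i i' : ℕ} (hm : 4 ≤ m) (hii : i ≤ i') (hi : i' < 4) :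
    Wk 4 m HC (DC m) (i' - i) i' 0 i 0 :=
  Wk.up (by omega) (by omega) (by omega) (by intro t _ _; unfold DC; omega)

/-- From the corner to row `0` and row `1`. -/
theorem wkC_O {m i j : ℕ} (hi : i < 2) (hij : i = 0 ∨ 1 ≤ j) (hj : j < m) :
    Wk 4 m HC (DC m) (i + j) 0 0 i j := by
  have w1 : Wk 4 m HC (DC m) (j - 0) 0 0 0 j :=
    Wk.right (by omega) hj (by omega) (by intro t _ _; unfold HC; omega)
  have w2 : Wk 4 m HC (DC m) (i - 0) 0 j i j :=
    Wk.down (by omega) hj (by omega) (by intro t _ _; unfold DC; omega)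
  have := w1.trans w2
  rwa [show j - 0 + (i - 0) = i + j by omega] at this

/-- Along row `2`. -/
theorem wkC_row {m i j j' : ℕ} (hi : i = 1 ∨ i = 2) (hj1 : 1 ≤ j) (hjj : j ≤ j') (hj : j' < m) :
    Wk 4 m HC (DC m) (j' - j) i j i j' :=
  Wk.right (by omega) (by omega) (by omega) (by intro t _ _; unfold HC; omega)

theorem wkC_e {m : ℕ} (hm : 4 ≤ m) : Wk 4 m HC (DC m) 1 3 1 2 1 :=
  Wk.arc (by omega) (by omega) (by omega) (by omega) (by unfold Arc HC DC; omega)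

theorem strongC {m : ℕ} (hm : 4 ≤ m) : StrongConnected (gA 4 m HC (DC m)) := by
  obtain ⟨k1, hk1⟩ : ∃ k, Wk 4 m HC (DC m) k 3 (m - 1) 0 0 :=
    ⟨_, (wkC_bot (j := 0) (j' := m - 1) (Nat.zero_le _) (by omega)).trans
      (wkC_col hm (Nat.zero_le _) (by omega))⟩
  have hk2 := wkC_z (i := 0) (j := 0) hm (by omega) (by omega) (by omega)
  refine strong_of_hub (a := 0) (b := 0) ?_ ?_
  · intro i j hi hj
    by_cases h3 : i = 3
    · subst h3
      exact ⟨_, (wkC_bot (Nat.zero_le _) hj).trans (wkC_col hm (Nat.zero_le _) (by omega))⟩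
    by_cases hj0 : j = 0
    · subst hj0
      exact ⟨_, wkC_col hm (Nat.zero_le _) hi⟩
    exact ⟨_, (wkC_z hm (by omega) (by omega) hj).trans hk1⟩
  · intro i j hi hj
    by_cases h3 : i = 3
    · subst h3
      exact ⟨_, hk2.trans (wkC_bot (j' := m - 1) (by omega) (by omega))⟩
    by_cases hj0 : j = 0
    · subst hj0
      exact ⟨_, (hk2.trans (wkC_bot (Nat.zero_le _) (by omega))).trans
        (wkC_col hm (by omega) (by omega))⟩
    by_cases h2 : i < 2
    · exact ⟨_, wkC_O h2 (by omega) hj⟩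
    obtain rfl : i = 2 := by omega
    exact ⟨_, ((hk2.trans (wkC_bot (j := 1) (by omega) (by omega))).trans (wkC_e hm)).trans
      (wkC_row (by omega) le_rfl (by omega) hj)⟩

set_option maxHeartbeats 4000000 in
theorem convexC {m : ℕ} (hm : 4 ≤ m) :
    DConvex (gA 4 m HC (DC m)) {v : Fin 4 × Fin m | ¬ SC m v.1 v.2} := by
  refine convex_grid (SC m) potC ⟨2, 1, by omega, by omega, ?_⟩ ?_ ?_
  · unfold SC; omega
  · intro i j c d ha hb hc hd h1 h2 h3
    unfold Arc HC DC SC potC at *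
    rcases h3 with ⟨h3, h4, h5⟩ | ⟨h3, h4, h5⟩ | ⟨h3, h4, h5⟩ | ⟨h3, h4, h5⟩ <;>
      split_ifs <;> omega
  · intro x x' e e' s s' y y' hx hx' he he' hs hs' hy hy' hSx hSe h1 hSs hSy h2
    have hx1 : (x = 3 ∧ x' = 1 ∧ e = 3 ∧ e' = 0) ∨ (x = 2 ∧ x' = 1 ∧ e = 2 ∧ e' = 0) ∨
        (x = 1 ∧ x' = 1 ∧ e = 1 ∧ e' = 0 ∧ m = 4) := by
      clear h2 hSs hSy
      unfold Arc HC DC SC at *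
      rcases h1 with ⟨rfl, rfl, h5⟩ | ⟨rfl, rfl, h5⟩ | ⟨rfl, rfl, h5⟩ | ⟨rfl, rfl, h5⟩ <;> omega
    have hyc : (y = 2 ∧ 1 ≤ y' ∧ s = 1 ∧ s' = y' ∧ y' + 3 < m) ∨
        (y = 1 ∧ m ≤ y' + 3 ∧ ((s = 1 ∧ s' + 1 = y' ∧ 1 ≤ s' ∧ 4 < m) ∨ (s = 0 ∧ s' = y'))) := by
      clear h1 hSx hSe
      unfold Arc HC DC SC at *
      rcases h2 with ⟨rfl, rfl, h5⟩ | ⟨rfl, rfl, h5⟩ | ⟨rfl, rfl, h5⟩ | ⟨rfl, rfl, h5⟩ <;> omega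
    have w2 : Wk 4 m HC (DC m) 1 2 (m - 3) 1 (m - 3) :=
      Wk.arc (by omega) (by omega) (by omega) (by omega) (by unfold Arc HC DC; omega)
    have w1 := wkC_row (i := 2) (j := 1) (j' := m - 3) (m := m) (by omega) le_rfl (by omega)
      (by omega)
    clear h1 h2 hSx hSe hSs hSy
    rcases hyc with ⟨rfl, h3, rfl, rfl, h4⟩ | ⟨rfl, h3, h4⟩
    · have w3 := wkC_row (i := 2) (j := 1) (j' := s') (m := m) (by omega) le_rfl h3 hs'
      rcases hx1 with ⟨rfl, rfl, rfl, rfl⟩ | ⟨rfl, rfl, rfl, rfl⟩ | ⟨rfl, rfl, rfl, rfl, h5⟩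
      · refine ⟨_, (wkC_e hm).trans w3, ?_⟩
        unfold potC
        push_cast
        split_ifs <;> omega
      · refine ⟨_, w3, ?_⟩
        unfold potC
        push_cast
        split_ifs <;> omega
      · omega
    · have w3 := wkC_row (i := 1) (j := m - 3) (j' := y') (m := m) (by omega) (by omega)
        (by omega) hy'
      have hs3 : potC s s' = 3 + y' := by
        unfold potC
        split_ifs <;> omega
      rw [hs3]
      rcases hx1 with ⟨rfl, rfl, rfl, rfl⟩ | ⟨rfl, rfl, rfl, rfl⟩ | ⟨rfl, rfl, rfl, rfl, h5⟩
      · refine ⟨_, (((wkC_e hm).trans w1).trans w2).trans w3, ?_⟩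
        unfold potC
        push_cast
        omega
      · refine ⟨_, (w1.trans w2).trans w3, ?_⟩
        unfold potC
        push_cast
        omega
      · subst h5
        refine ⟨_, w3, ?_⟩
        unfold potC
        push_cast
        omega

set_option maxHeartbeats 4000000 in
theorem hullC {m : ℕ} (hm : 4 ≤ m) {T : Set (Fin 4 × Fin m)}
    (hT : DConvex (gA 4 m HC (DC m)) T) {s s' t t' : ℕ} (hs : In T s s')
    (hSs : SC m s s') (ht : In T t t') (hSt : ¬ SC m t t')
    (ht1 : ¬ (t = 1 ∧ t' = 1)) (ht2 : ¬ (t = 2 ∧ t' = 1)) :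
    ∀ i j, i < 4 → j < m → In T i j := by
  have hstr := strongC hm
  have ht4 : t < 4 := by
    obtain ⟨w, _, h1, _⟩ := ht
    have := w.1.2
    omega
  have hO : In T 0 0 := by
    by_cases hs0 : s = 0 ∧ s' = 0
    · obtain ⟨rfl, rfl⟩ := hs0; exact hs
    by_cases hs1 : s' = 0
    · refine In.sep hstr hT hs ht (fun c d => 1 ≤ c ∧ d = 0) 0 0 (by omega) (by omega) (by omega)
        (by unfold SC at hSt; omega) ?_
      intro i j c d ha hb hc hd h1 h2 h3
      clear hSs hSt
      unfold Arc HC DC at *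
      rcases h3 with ⟨rfl, rfl, h5⟩ | ⟨rfl, rfl, h5⟩ | ⟨rfl, rfl, h5⟩ | ⟨rfl, rfl, h5⟩ <;> omega
    · refine In.sep hstr hT ht hs (fun c d => ¬ (c = 0 ∨ (c = 1 ∧ 1 ≤ d ∧ d + 3 < m))) 0 0
        (by omega) (by omega) (by unfold SC at hSt; omega) (by unfold SC at hSs; omega) ?_
      intro i j c d ha hb hc hd h1 h2 h3
      clear hSs hSt
      unfold Arc HC DC at *
      rcases h3 with ⟨rfl, rfl, h5⟩ | ⟨rfl, rfl, h5⟩ | ⟨rfl, rfl, h5⟩ | ⟨rfl, rfl, h5⟩ <;> omega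
  have hz : In T 3 (m - 1) := by
    by_cases h3 : t = 3
    · refine In.sep hstr hT hO ht (fun c d => ¬ (c = 3 ∧ 1 ≤ d)) 3 (m - 1) (by omega) (by omega)
        (by omega) (by unfold SC at hSt; omega) ?_
      intro i j c d ha hb hc hd h1 h2 h3
      clear hSs hSt
      unfold Arc HC DC at *
      rcases h3 with ⟨rfl, rfl, h5⟩ | ⟨rfl, rfl, h5⟩ | ⟨rfl, rfl, h5⟩ | ⟨rfl, rfl, h5⟩ <;> omega
    · refine In.sep hstr hT ht hO (fun c d => c ≤ 2 ∧ 2 ≤ d) 3 (m - 1) (by omega) (by omega)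
        (by unfold SC at hSt; omega) (by omega) ?_
      intro i j c d ha hb hc hd h1 h2 h3
      clear hSs hSt
      unfold Arc HC DC at *
      rcases h3 with ⟨rfl, rfl, h5⟩ | ⟨rfl, rfl, h5⟩ | ⟨rfl, rfl, h5⟩ | ⟨rfl, rfl, h5⟩ <;> omega
  clear hSs hSt hs ht
  have hbot : ∀ j, 1 ≤ j → j < m → In T 3 j := by
    intro j hj1 hj
    by_cases hjm : j = m - 1
    · subst hjm; exact hz
    refine In.sep hstr hT hz hO (fun c d => (c ≤ 2 ∧ 2 ≤ d) ∨ (c = 3 ∧ j < d)) 3 j (by omega)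
      (by omega) (by omega) (by omega) ?_
    intro i j c d ha hb hc hd h1 h2 h3
    unfold Arc HC DC at *
    rcases h3 with ⟨rfl, rfl, h5⟩ | ⟨rfl, rfl, h5⟩ | ⟨rfl, rfl, h5⟩ | ⟨rfl, rfl, h5⟩ <;> omega
  have h2m : In T 2 (m - 1) := by
    refine In.manh hT hO hz (?_ : Wk 4 m HC (DC m) (1 + (m - 1) + (2 - 1)) 0 0 2 (m - 1))
      (wkC_z hm (by omega) (by omega) (by omega)) (by omega)
    exact (wkC_O (by omega) (by omega) (by omega)).trans
      (Wk.down (by omega) (by omega) (by omega) (by intro t _ _; unfold DC; omega))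
  have h31 := hbot 1 le_rfl (by omega)
  intro i j hi hj
  by_cases hj0 : j = 0
  · subst hj0
    exact In.manh hT h31 hO ((wkC_bot (Nat.zero_le _) (by omega)).trans
      (wkC_col hm (by omega) (by omega))) (wkC_col hm (Nat.zero_le _) (by omega)) (by omega)
  by_cases h3 : i = 3
  · subst h3; exact hbot j (by omega) hj
  by_cases h2 : i = 2
  · subst h2
    exact In.manh hT h31 h2m ((wkC_e hm).trans (wkC_row (by omega) le_rfl (by omega) hj))
      (wkC_row (by omega) (by omega) (by omega) (by omega)) (by omega)
  exact In.manh hT hO hz (wkC_O (by omega) (by omega) hj) (wkC_z hm (by omega) (by omega) hj)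
    (by omega)

theorem cardC {m : ℕ} (hm : 4 ≤ m) :
    {v : Fin 4 × Fin m | SC m v.1 v.2}.ncard = 2 * m - 1 := by
  have : {v : Fin 4 × Fin m | SC m v.1 v.2} =
      {v : Fin 4 × Fin m | SC m v.1 v.2 ∧ (v.1 : ℕ) ≠ 3} ∪
      {v : Fin 4 × Fin m | (v.1 : ℕ) = 3 ∧ 0 ≤ (v.2 : ℕ) ∧ (v.2 : ℕ) < 1} := by
    ext v
    have := v.1.2
    simp only [Set.mem_ofPred_eq, Set.mem_union]
    unfold SC
    omega
  rw [this, Set.ncard_union_eq _ (Set.toFinite _) (Set.toFinite _), card_row (by omega) (by omega),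
    card_three (i₁ := 0) (l₁ := 0) (h₁ := m) (i₂ := 1) (l₂ := 0) (h₂ := m - 3) (i₃ := 2)
      (l₃ := 0) (h₃ := 1) (by omega) (by omega) (by omega) (by omega) (by omega) (by omega)
      (by omega) (by omega) (by omega) (fun i j => SC m i j ∧ i ≠ 3) ?_]
  · omega
  · intro i j hi hj
    unfold SC; omega
  · rw [Set.disjoint_left]
    rintro v ⟨_, h⟩ ⟨h', _⟩
    exact h h'

theorem famC {m : ℕ} (hm : 4 ≤ m) :
    4 * m - (2 * m - 1) ∈ strongConvexitySpectrum (gridGraph 4 m) := by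
  refine template HC (DC m) (SC m) (strongC hm) (convexC hm) (cardC hm)
    ⟨0, 0, by omega, by omega, Or.inl rfl⟩ ?_
  rintro T hT ⟨s, s', hs, hSs⟩
  by_cases h : ∃ t t', In T t t' ∧ ¬ SC m t t' ∧ ¬ (t = 1 ∧ t' = 1) ∧ ¬ (t = 2 ∧ t' = 1)
  · obtain ⟨t, t', ht, hst, h1, h2⟩ := h
    exact Or.inl (hullC hm hT hs hSs ht hst h1 h2)
  · right
    have h1 : T ⊆ insert ((1, ⟨1, by omega⟩) : Fin 4 × Fin m) (insert (2, ⟨1, by omega⟩)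
        {v : Fin 4 × Fin m | SC m v.1 v.2}) := by
      intro v hv
      by_contra hcon
      simp only [Set.mem_insert_iff, Set.mem_ofPred_eq, not_or] at hcon
      obtain ⟨c1, c2, c3⟩ := hcon
      exact h ⟨v.1, v.2, ⟨v, hv, rfl, rfl⟩, c3, fun hh => c1 (pt_ext hh.1 hh.2),
        fun hh => c2 (pt_ext hh.1 hh.2)⟩
    have h2 := Set.ncard_le_ncard h1 (Set.toFinite _)
    have h3 := Set.ncard_insert_le ((1, ⟨1, by omega⟩) : Fin 4 × Fin m)
      (insert (2, ⟨1, by omega⟩) {v : Fin 4 × Fin m | SC m v.1 v.2})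
    have h4 := Set.ncard_insert_le ((2, ⟨1, by omega⟩) : Fin 4 × Fin m)
      {v : Fin 4 × Fin m | SC m v.1 v.2}
    rw [cardC hm] at h4
    omega

/-! ### Assembly -/

theorem main_aux {n m k : ℕ} (hn : 4 ≤ n) (hm : 4 ≤ m) (h6 : 6 ≤ k) (hk : k ≤ 2 * m - 1) :
    n * m - k ∈ strongConvexitySpectrum (gridGraph n m) := by
  by_cases h1 : k + 4 ≤ 2 * m
  · exact famB (a := (k + 1) / 2) (b := k / 2) hn hm (by omega) (by omega) (by omega) (by omega)
      (by omega)
  by_cases h2 : k + 3 = 2 * m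
  · exact famA (p := 3) (q := m) hn hm (by omega) (by omega) le_rfl (by omega) (by omega)
  by_cases h3 : k + 2 = 2 * m
  · exact famA (p := 2) (q := m) hn hm (by omega) (by omega) le_rfl (by omega) (by omega)
  obtain rfl : k = 2 * m - 1 := by omega
  by_cases h5 : n = 4
  · subst h5; exact famC hm
  · exact famA (p := 2) (q := m - 1) hn hm (by omega) (by omega) (by omega) (by omega) (by omega)

theorem swap_aux {n m k : ℕ} (h : m * n - k ∈ strongConvexitySpectrum (gridGraph m n)) :
    n * m - k ∈ strongConvexitySpectrum (gridGraph n m) := by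
  rw [mul_comm]
  refine spectrum_iso (Equiv.prodComm _ _) ?_ h
  intro x y
  unfold gridGraph
  simp only [SimpleGraph.boxProd_adj, Equiv.prodComm_apply, Prod.fst_swap, Prod.snd_swap]
  tauto
end GridSpec

/-- Realizable values `nm - k` for `6 ≤ k ≤ 2·max{n,m} - 1` in the strong convexity
spectrum of `P_n □ P_m`; moreover `nm - 5` is realizable when `m = 4` or `n = 4`. -/
theorem nm_sub_k_mem_strongConvexitySpectrum_grid (n m : ℕ) (hn : 4 ≤ n) (hm : 4 ≤ m) :
    (∀ k : ℕ, 6 ≤ k → k ≤ 2 * max n m - 1 →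
      n * m - k ∈ strongConvexitySpectrum (gridGraph n m)) ∧
    ((m = 4 ∨ n = 4) → n * m - 5 ∈ strongConvexitySpectrum (gridGraph n m)) := by
  constructor
  · intro k h6 hk
    rcases le_total n m with h | h
    · rw [max_eq_right h] at hk
      exact GridSpec.main_aux hn hm h6 hk
    · rw [max_eq_left h] at hk
      exact GridSpec.swap_aux (GridSpec.main_aux hm hn h6 hk)
  · rintro (rfl | rfl)
    · exact GridSpec.famA (p := 3) (q := 4) hn hm (by omega) (by omega) le_rfl (by omega) rfl
    · exact GridSpec.swap_aux
        (GridSpec.famA (p := 3) (q := 4) hm hn (by omega) (by omega) le_rfl (by omega) rfl)
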